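/- Let p be an odd prime, ω = e^{2πi/p}, Q the set of nonzero quadratic residues mod p and N the set of quadratic non-residues mod p. Then Σ_{x∈Q} ω^x − Σ_{x∈N} ω^x equals √p if p ≡ 1 (mod 4) and i√p if p ≡ 3 (mod 4). -/

import Mathlib

open Polynomial in
lemma gs_sum_eval (p m : ℕ) [Fact p.Prime] (hm : p = 2 * m + 1) (D : (ZMod p)[X])
    (hD : D.Monic) (hd : D.natDegree = m) :
    ∑ x : ZMod p, x ^ m * D.eval x = -1 := by
  have hp := (Fact.out : p.Prime)
  have h1 : ∀ x : ZMod p, x ^ m * D.eval x = (X ^ m * D).eval x := by intro x; simp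
  have hmon : (X ^ m * D).Monic := (monic_X_pow m).mul hD
  have hdeg : (X ^ m * D).natDegree = 2 * m := by
    rw [(monic_X_pow m).natDegree_mul hD, natDegree_X_pow, hd]; ring
  simp_rw [h1, eval_eq_sum_range, hdeg]
  rw [Finset.sum_comm]
  simp_rw [← Finset.mul_sum]
  rw [Finset.sum_range_succ, Finset.sum_eq_zero]
  · have : (X ^ m * D).coeff (2 * m) = 1 := by
      rw [← hdeg]; exact hmon
    rw [this]
    have h2 : ∀ x : ZMod p, x ^ (2 * m) = 1 - (if x = 0 then 1 else 0) := by
      intro x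
      split_ifs with h
      · have : 2 * m ≠ 0 := by have := hp.two_le; omega
        simp [h, this]
      · have := ZMod.pow_card_sub_one_eq_one h
        rw [show p - 1 = 2 * m by omega] at this
        simp [this]
    simp_rw [h2]
    simp
  · intro i hi
    rw [FiniteField.sum_pow_lt_card_sub_one, mul_zero]
    rw [ZMod.card]
    have := Finset.mem_range.1 hi
    omega

lemma gs_prod_fact (m : ℕ) : (∏ k ∈ Finset.range m, (4 * k + 2)) * m.factorial = (2 * m).factorial := by
  induction m with
  | zero => simp
  | succ n ih =>
    rw [Finset.prod_range_succ, Nat.factorial_succ, show 2 * (n + 1) = (2 * n + 1) + 1 by ring,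
      Nat.factorial_succ, Nat.factorial_succ, ← ih]
    ring

open Polynomial in
noncomputable def gsF (p : ℕ) [Fact p.Prime] : ℤ[X] :=
  ∑ x : ZMod p, C (quadraticChar (ZMod p) x) * X ^ x.val

open Polynomial in
noncomputable def gsP (p m : ℕ) : ℤ[X] :=
  ∏ k ∈ Finset.range m, (X ^ (2 * k + 1) - X ^ (p - (2 * k + 1)))

open Polynomial in
lemma gsF_deriv (p m : ℕ) [Fact p.Prime] (hm : p = 2 * m + 1) :
    (derivative^[m] ((gsF p).map (Int.castRingHom (ZMod p)))).eval 1 = -1 := by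
  rw [← gs_sum_eval p m hm (descPochhammer (ZMod p) m) (monic_descPochhammer _ m)
    (descPochhammer_natDegree _ m)]
  have hp2 : ringChar (ZMod p) ≠ 2 := by
    rw [ZMod.ringChar_zmod_n]; omega
  simp only [gsF, Polynomial.map_sum, iterate_derivative_sum, eval_finsetSum, Polynomial.map_mul,
    Polynomial.map_pow, map_X, map_C, iterate_derivative_C_mul,
    iterate_derivative_X_pow_eq_smul]
  refine Finset.sum_congr rfl fun x _ => ?_
  have h := quadraticChar_eq_pow_of_char_ne_two' hp2 x
  rw [ZMod.card, show p / 2 = m by omega] at h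
  have h3 := descPochhammer_eval_eq_descFactorial (ZMod p) x.val m
  rw [ZMod.natCast_zmod_val] at h3
  rw [h3, ← h]
  simp [mul_comm]

open Polynomial in
lemma gsP_deriv (p m : ℕ) [Fact p.Prime] (hm : p = 2 * m + 1) :
    (derivative^[m] ((gsP p m).map (Int.castRingHom (ZMod p)))).eval 1 = -1 := by
  have key : ∀ k ∈ Finset.range m, ∃ q : (ZMod p)[X],
      (X ^ (2 * k + 1) - X ^ (p - (2 * k + 1)) : (ZMod p)[X]) = (X - C 1) * q ∧
        q.eval 1 = ((4 * k + 2 : ℕ) : ZMod p) := by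
    intro k hk
    have hk := Finset.mem_range.1 hk
    have hr : (X - C 1) ∣ (X ^ (2 * k + 1) - X ^ (p - (2 * k + 1)) : (ZMod p)[X]) := by
      rw [dvd_iff_isRoot]; simp
    obtain ⟨q, hq⟩ := hr
    refine ⟨q, hq, ?_⟩
    have h := congrArg (fun f => (derivative f).eval 1) hq
    simp only [derivative_sub, derivative_X_pow, derivative_mul, eval_sub, eval_mul, eval_add,
      eval_C, eval_pow, eval_X, one_pow, derivative_X, derivative_C, eval_one] at h
    rw [Nat.cast_sub (by omega)] at h
    simp at h
    push_cast
    linear_combination -h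
  choose! q hq hq1 using key
  have hfac : (gsP p m).map (Int.castRingHom (ZMod p)) =
      (X - C 1) ^ m * ∏ k ∈ Finset.range m, q k := by
    simp only [gsP, Polynomial.map_prod, Polynomial.map_sub, Polynomial.map_pow, map_X]
    rw [Finset.prod_congr rfl hq, Finset.prod_mul_distrib]
    simp
  have h := aeval_iterate_derivative_self (A := ZMod p)
    ((gsP p m).map (Int.castRingHom (ZMod p))) m 1 (p' := ∏ k ∈ Finset.range m, q k)
    (by simpa using hfac)
  rw [coe_aeval_eq_eval] at h
  rw [h, eval_prod, Finset.prod_congr rfl hq1, ← Nat.cast_prod, nsmul_eq_mul, ← Nat.cast_mul,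
    mul_comm, gs_prod_fact, show 2 * m = p - 1 by omega]
  exact ZMod.wilsons_lemma p

open Polynomial in
lemma gs_sign (p m : ℕ) [Fact p.Prime] (hm : p = 2 * m + 1) (ζ : ℂ) (hζ : IsPrimitiveRoot ζ p)
    (h : aeval ζ (gsF p) = - aeval ζ (gsP p m)) : False := by
  have hp := (Fact.out : p.Prime)
  have h0 : aeval ζ (gsF p + gsP p m) = 0 := by rw [map_add, h]; ring
  have hd : cyclotomic p ℤ ∣ gsF p + gsP p m := by
    rw [cyclotomic_eq_minpoly hζ hp.pos]
    exact minpoly.isIntegrallyClosed_dvd (hζ.isIntegral hp.pos) h0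
  have hd2 := map_dvd (mapRingHom (Int.castRingHom (ZMod p))) hd
  have hc : cyclotomic p (ZMod p) = (X - C 1) ^ (p - 1) := by
    have := cyclotomic_mul_prime_eq_pow_of_not_dvd (ZMod p) (p := p) (n := 1) hp.not_dvd_one
    simpa using this
  rw [coe_mapRingHom, map_cyclotomic, hc] at hd2
  obtain ⟨r, hr⟩ := hd2
  have h4 := aeval_iterate_derivative_of_lt (A := ZMod p)
    ((gsF p + gsP p m).map (Int.castRingHom (ZMod p))) (p - 1) 1 (p' := r)
    (by simpa using hr) (k := m) (by have := hp.two_le; omega)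
  rw [coe_aeval_eq_eval, Polynomial.map_add, iterate_map_add, eval_add, gsF_deriv p m hm,
    gsP_deriv p m hm] at h4
  have h5 : ((2 : ℕ) : ZMod p) = 0 := by push_cast; linear_combination -h4
  rw [ZMod.natCast_eq_zero_iff] at h5
  have := Nat.le_of_dvd (by norm_num) h5
  have := hp.two_le
  omega

open Polynomial in
lemma gsF_sq (p m : ℕ) [Fact p.Prime] (hm : p = 2 * m + 1) (ω : ℂ)
    (hω : ω = Complex.exp (2 * Real.pi * Complex.I / p)) :
    (aeval ω (gsF p)) ^ 2 = (-1) ^ m * p := by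
  have hp2 : ringChar (ZMod p) ≠ 2 := by
    rw [ZMod.ringChar_zmod_n]; omega
  set χ := (quadraticChar (ZMod p)).ringHomComp (Int.castRingHom ℂ) with hχ
  have h1 : χ ≠ 1 := by
    rw [hχ, MulChar.ringHomComp_ne_one_iff (RingHom.injective_int _)]
    exact quadraticChar_ne_one hp2
  have h2 : χ.IsQuadratic := (quadraticChar_isQuadratic (ZMod p)).comp _
  have h := gaussSum_sq h1 h2 (ZMod.isPrimitive_stdAddChar p)
  have hg : gaussSum χ (ZMod.stdAddChar (N := p)) = aeval ω (gsF p) := by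
    simp only [gaussSum, gsF, map_sum, map_mul, map_pow, aeval_X, aeval_C]
    refine Finset.sum_congr rfl fun x _ => ?_
    have e : ω ^ x.val = Complex.exp (2 * Real.pi * Complex.I * x.val / p) := by
      rw [hω, ← Complex.exp_nat_mul]; congr 1; ring
    rw [ZMod.stdAddChar_apply, ZMod.toCircle_apply, e]
    rfl
  rw [← hg, h, ZMod.card, hχ, MulChar.ringHomComp_apply, quadraticChar_neg_one hp2, ZMod.card,
    ZMod.χ₄_eq_neg_one_pow (by omega), show p / 2 = m by omega]
  simp

lemma gs_prod_pair {M : Type*} [CommMonoid M] (f : ℕ → M) (m : ℕ) :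
    ∏ i ∈ Finset.range (2 * m), f i =
      (∏ k ∈ Finset.range m, f (2 * k)) * ∏ k ∈ Finset.range m, f (2 * k + 1) := by
  induction m with
  | zero => simp
  | succ n ih =>
    rw [show 2 * (n + 1) = 2 * n + 1 + 1 by ring, Finset.prod_range_succ, Finset.prod_range_succ,
      ih, Finset.prod_range_succ, Finset.prod_range_succ]
    simp only [mul_comm, mul_left_comm, mul_assoc]

open Polynomial in
lemma gsP_norm (p m : ℕ) (hm : p = 2 * m + 1) (ω : ℂ) (hω : IsPrimitiveRoot ω p) :
    ‖aeval ω (gsP p m)‖ ^ 2 = p := by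
  have hn : ‖ω‖ = 1 := hω.norm'_eq_one (by omega)
  have h2 : IsPrimitiveRoot (ω ^ 2) (2 * m + 1) := by
    rw [← hm]
    exact hω.pow_of_coprime 2 (by rw [hm]; simp)
  have h3 := congrArg norm h2.prod_one_sub_pow_eq_order
  rw [gs_prod_pair, norm_mul, norm_prod, norm_prod] at h3
  have hf : ∀ j, j ≤ p → ‖ω ^ j - ω ^ (p - j)‖ = ‖1 - (ω ^ 2) ^ j‖ := by
    intro j hj
    have : ω ^ (p - j) * (1 - (ω ^ 2) ^ j) = -(ω ^ j - ω ^ (p - j)) := by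
      have e : ω ^ (p - j) * ω ^ j = 1 := by
        rw [← pow_add, Nat.sub_add_cancel hj, hω.pow_eq_one]
      linear_combination (-ω ^ j) * e
    rw [← norm_neg, ← this, norm_mul, norm_pow, hn]
    simp
  have hA : ‖aeval ω (gsP p m)‖ = ∏ k ∈ Finset.range m, ‖1 - (ω ^ 2) ^ (2 * k + 1)‖ := by
    simp only [gsP, map_prod, map_sub, map_pow, aeval_X, norm_prod]
    refine Finset.prod_congr rfl fun k hk => hf _ ?_
    have := Finset.mem_range.1 hk
    omega
  have hB : ‖aeval ω (gsP p m)‖ = ∏ k ∈ Finset.range m, ‖1 - (ω ^ 2) ^ (2 * k + 1 + 1)‖ := by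
    rw [← Finset.prod_range_reflect]
    simp only [gsP, map_prod, map_sub, map_pow, aeval_X, norm_prod]
    refine Finset.prod_congr rfl fun k hk => ?_
    have := Finset.mem_range.1 hk
    rw [← hf _ (by omega), norm_sub_rev]
    congr 3 <;> omega
  rw [← hA, ← hB, ← sq] at h3
  rw [h3, hm]
  have : ((2 * m : ℕ) : ℂ) + 1 = ((2 * m + 1 : ℕ) : ℂ) := by push_cast; ring
  rw [this, Complex.norm_natCast]

open Polynomial in
lemma gsP_sin (p m : ℕ) (hm : p = 2 * m + 1) (ω : ℂ)
    (hω : ω = Complex.exp (2 * Real.pi * Complex.I / p)) :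
    aeval ω (gsP p m) = Complex.I ^ m *
      ((∏ k ∈ Finset.range m, (2 * Real.sin (2 * Real.pi * (2 * k + 1 : ℕ) / p)) : ℝ) : ℂ) := by
  have hp0 : (p : ℂ) ≠ 0 := Nat.cast_ne_zero.2 (by omega)
  rw [Complex.ofReal_prod]
  nth_rewrite 2 [← Finset.card_range m]
  rw [← Finset.prod_const, ← Finset.prod_mul_distrib]
  simp only [gsP, map_prod, map_sub, map_pow, aeval_X]
  refine Finset.prod_congr rfl fun k hk => ?_
  have := Finset.mem_range.1 hk
  set j := 2 * k + 1 with hj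
  have e1 : ω ^ j = Complex.exp ((2 * Real.pi * j / p : ℂ) * Complex.I) := by
    rw [hω, ← Complex.exp_nat_mul]; congr 1; ring
  have e2 : ω ^ (p - j) = Complex.exp (-(2 * Real.pi * j / p : ℂ) * Complex.I) := by
    rw [hω, ← Complex.exp_nat_mul, Nat.cast_sub (by omega)]
    rw [← Complex.exp_periodic (-(2 * Real.pi * j / p : ℂ) * Complex.I)]
    congr 1
    field_simp
    ring
  push_cast
  rw [e1, e2, Complex.sin]
  linear_combination (Complex.exp ((2 * Real.pi * j / p : ℂ) * Complex.I) - Complex.exp (-(2 * Real.pi * j / p : ℂ) * Complex.I)) * Complex.I_sq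

lemma gs_sin_pos (p j : ℕ) (h0 : 0 < j) (h : 2 * j < p) :
    0 < 2 * Real.sin (2 * Real.pi * j / p) := by
  have hp : (0 : ℝ) < p := by exact_mod_cast (by omega : 0 < p)
  have hj : (0 : ℝ) < j := by exact_mod_cast h0
  have h' : (2 * j : ℝ) < p := by exact_mod_cast h
  have := Real.sin_pos_of_pos_of_lt_pi (x := 2 * Real.pi * j / p) (by positivity)
    (by rw [div_lt_iff₀ hp]; nlinarith [Real.pi_pos])
  linarith

lemma gs_sin_neg (p j : ℕ) (h0 : j < p) (h : p < 2 * j) :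
    0 < -(2 * Real.sin (2 * Real.pi * j / p)) := by
  have := gs_sin_pos p (p - j) (by omega) (by omega)
  have hp : (p : ℝ) ≠ 0 := by exact_mod_cast (by omega : p ≠ 0)
  rw [Nat.cast_sub h0.le, show 2 * Real.pi * ((p : ℝ) - j) / p = 2 * Real.pi - 2 * Real.pi * j / p by
    field_simp, Real.sin_two_pi_sub] at this
  linarith

lemma gs_sin_prod (p a b : ℕ) (hm : p = 2 * (a + b) + 1) (h1 : 4 * a < p + 2) (h2 : p < 4 * a + 2) :
    0 < (-1) ^ b * ∏ k ∈ Finset.range (a + b),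
      (2 * Real.sin (2 * Real.pi * (2 * k + 1 : ℕ) / p)) := by
  rw [Finset.prod_range_add, mul_left_comm]
  refine mul_pos (Finset.prod_pos fun k hk => ?_) ?_
  · have := Finset.mem_range.1 hk
    exact gs_sin_pos _ _ (by omega) (by omega)
  · nth_rewrite 1 [← Finset.card_range b]
    rw [← Finset.prod_const, ← Finset.prod_mul_distrib]
    refine Finset.prod_pos fun k hk => ?_
    have := Finset.mem_range.1 hk
    rw [neg_one_mul]
    exact gs_sin_neg _ _ (by omega) (by omega)

open Polynomial in
lemma gs_main (p a b : ℕ) [Fact p.Prime] (hm : p = 2 * (a + b) + 1) (h1 : 4 * a < p + 2)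
    (h2 : p < 4 * a + 2) (ω : ℂ) (hω : ω = Complex.exp (2 * Real.pi * Complex.I / p)) :
    aeval ω (gsF p) = Complex.I ^ (a + b) * (-1) ^ b * Real.sqrt p := by
  have hp := (Fact.out : p.Prime)
  have hprim : IsPrimitiveRoot ω p := by rw [hω]; exact Complex.isPrimitiveRoot_exp p hp.ne_zero
  set S := ∏ k ∈ Finset.range (a + b),
      (2 * Real.sin (2 * Real.pi * (2 * k + 1 : ℕ) / p)) with hS
  have hpos : 0 < (-1) ^ b * S := gs_sin_prod p a b hm h1 h2
  have hP : aeval ω (gsP p (a + b)) = Complex.I ^ (a + b) * (S : ℂ) := gsP_sin p _ hm ω hω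
  have hN := gsP_norm p _ hm ω hprim
  rw [hP, norm_mul, norm_pow, Complex.norm_I, one_pow, one_mul, Complex.norm_real,
    Real.norm_eq_abs, sq_abs] at hN
  have hb : ((-1 : ℝ) ^ b) * (-1) ^ b = 1 := by rw [← mul_pow]; simp
  have hsq : Real.sqrt p = (-1) ^ b * S := by
    rw [← hN, show S ^ 2 = ((-1) ^ b * S) ^ 2 by linear_combination (-S ^ 2) * hb]
    exact Real.sqrt_sq hpos.le
  have hS' : S = (-1) ^ b * Real.sqrt p := by rw [hsq]; linear_combination (-S) * hb
  have hP' : aeval ω (gsP p (a + b)) = Complex.I ^ (a + b) * (-1) ^ b * Real.sqrt p := by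
    rw [hP, hS']; push_cast; ring
  rw [← hP']
  have hF := gsF_sq p _ hm ω hω
  have hPs : (aeval ω (gsP p (a + b))) ^ 2 = (-1) ^ (a + b) * p := by
    rw [hP, mul_pow, ← Complex.ofReal_pow, hN, ← pow_mul, mul_comm _ 2, pow_mul, Complex.I_sq]
    simp
  rw [← hPs] at hF
  rcases sq_eq_sq_iff_eq_or_eq_neg.1 hF with h | h
  · exact h
  · exact (gs_sign p _ hm ω hprim h).elim

open Finset Polynomial in
lemma gs_conv (p : ℕ) [Fact p.Prime] (ω : ℂ) :
    (∑ x ∈ univ.filter (fun x : (ZMod p)ˣ => IsSquare x), ω ^ ((x : ZMod p).val)) -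
        (∑ x ∈ univ.filter (fun x : (ZMod p)ˣ => ¬ IsSquare x), ω ^ ((x : ZMod p).val))
        = aeval ω (gsF p) := by
  have hs : ∀ u : (ZMod p)ˣ, IsSquare u ↔ IsSquare (u : ZMod p) := by
    intro u
    constructor
    · rintro ⟨v, rfl⟩; exact ⟨v, by simp⟩
    · rintro ⟨v, hv⟩
      have hv0 : v ≠ 0 := by rintro rfl; simp at hv
      exact ⟨Units.mk0 v hv0, by ext; simpa using hv⟩
  rw [sum_filter, sum_filter, ← sum_sub_distrib]
  simp only [gsF, map_sum, map_mul, map_pow, aeval_X, aeval_C]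
  have h0 : ∑ x : ZMod p, (algebraMap ℤ ℂ) (quadraticChar (ZMod p) x) * ω ^ x.val =
      ∑ u : (ZMod p)ˣ, (algebraMap ℤ ℂ) (quadraticChar (ZMod p) u) * ω ^ (u : ZMod p).val := by
    symm
    refine Finset.sum_of_injOn (fun u : (ZMod p)ˣ => (u : ZMod p)) (fun a _ b _ h => Units.ext h)
      (by simp) ?_ (by simp)
    intro x _ hx
    have : x = 0 := by
      by_contra h
      exact hx ⟨Units.mk0 x h, by simp, by simp⟩
    simp [this]
  rw [h0]
  refine sum_congr rfl fun u _ => ?_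
  by_cases h : IsSquare u
  · rw [(quadraticChar_one_iff_isSquare u.ne_zero).2 ((hs u).1 h)]
    simp [h]
  · rw [quadraticChar_neg_one_iff_not_isSquare.2 (fun h' => h ((hs u).2 h'))]
    simp [h]

open Finset in
/-- The quadratic Gauss sum: for an odd prime `p` and `ω = e^{2πi/p}`, the sum
over quadratic residues minus the sum over non-residues equals `√p` when
`p ≡ 1 (mod 4)` and `i√p` when `p ≡ 3 (mod 4)`. -/
theorem stmt_18 (p : ℕ) (hp : p.Prime) [Fact p.Prime] (hodd : p ≠ 2)
    (ω : ℂ) (hω : ω = Complex.exp (2 * Real.pi * Complex.I / p)) :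
    (p % 4 = 1 →
      (∑ x ∈ univ.filter (fun x : (ZMod p)ˣ => IsSquare x), ω ^ ((x : ZMod p).val)) -
        (∑ x ∈ univ.filter (fun x : (ZMod p)ˣ => ¬ IsSquare x), ω ^ ((x : ZMod p).val))
        = Real.sqrt p) ∧
    (p % 4 = 3 →
      (∑ x ∈ univ.filter (fun x : (ZMod p)ˣ => IsSquare x), ω ^ ((x : ZMod p).val)) -
        (∑ x ∈ univ.filter (fun x : (ZMod p)ˣ => ¬ IsSquare x), ω ^ ((x : ZMod p).val))
        = Complex.I * Real.sqrt p) := by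
  have hb : ∀ n : ℕ, ((-1 : ℂ) ^ n) * (-1) ^ n = 1 := by intro n; rw [← mul_pow]; simp
  constructor
  · intro h
    rw [gs_conv, gs_main p (p / 4) (p / 4) (by omega) (by omega) (by omega) ω hω, ← two_mul,
      pow_mul, Complex.I_sq, hb, one_mul]
  · intro h
    rw [gs_conv, gs_main p (p / 4 + 1) (p / 4) (by omega) (by omega) (by omega) ω hω,
      show p / 4 + 1 + p / 4 = 2 * (p / 4) + 1 by ring, pow_succ, pow_mul, Complex.I_sq]
    linear_combination (Complex.I * Real.sqrt p) * hb (p / 4)
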